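/- Let m > 1 be an integer. Let u ∈ ℤ^m and v ∈ ℤ^m be column vectors such that the first entry of v equals 1. Let γ be the greatest common divisor of the entries of u, set d = vᵀu ∈ ℤ, and let L = d·I_m − u·vᵀ ∈ ℤ^{m×m}. Then the cokernel ℤ^m / (L·ℤ^m) is isomorphic as an abelian group to ℤ ⊕ (ℤ/γℤ) ⊕ (ℤ/dℤ)^{m−2}. -/

import Mathlib

/-!
Write `f x = vᵀx`, so that `L x = d x - f(x) u` with `d = f(u)`. As `f` is surjective, it is the
first coordinate of some linear isomorphism `ℤ^m ≃ ℤ × ℤ^(m-1)`; a change of basis of `ℤ^(m-1)`,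
which leaves `f` alone, then brings `u` to the form `(d, g, 0, …, 0)`. In these coordinates
`L (t, s, y) = (0, d s - t g, d y)`, so the image of `L` is `0 × (d, g) × (d)^(m-2)`. Finally the
ideal `(d, g)` is generated by `γ`, because the set of values at `u` of all linear functionals does
not depend on the coordinates.
-/

section OrderIdeal

variable {R M N : Type*} [CommRing R] [AddCommGroup M] [Module R M] [AddCommGroup N] [Module R N]

/-- The order ideal of `x : M`: all values at `x` of linear functionals on `M`. It is the
coordinate-free form of the ideal generated by the entries of a vector. -/
def orderIdeal (x : M) : Ideal R :=
  LinearMap.range (Module.Dual.eval R M x)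

theorem mem_orderIdeal {x : M} {c : R} :
    c ∈ orderIdeal x ↔ ∃ f : Module.Dual R M, f x = c :=
  Iff.rfl

theorem orderIdeal_linearEquiv_apply (e : M ≃ₗ[R] N) (x : M) :
    (orderIdeal (e x) : Ideal R) = orderIdeal x := by
  ext c
  simp only [mem_orderIdeal]
  constructor
  · rintro ⟨f, hf⟩
    exact ⟨f ∘ₗ e, hf⟩
  · rintro ⟨f, hf⟩
    exact ⟨f ∘ₗ e.symm, by simpa using hf⟩

theorem orderIdeal_pi {ι : Type*} [Finite ι] (u : ι → R) :
    orderIdeal u = Ideal.span (Set.range u) := by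
  classical
  have := Fintype.ofFinite ι
  ext c
  rw [mem_orderIdeal, Ideal.mem_span_range_iff_exists_fun]
  simp_rw [(dotProductEquiv R ι).surjective.exists, dotProductEquiv_apply_apply, dotProduct]

theorem orderIdeal_pair_zero (d g : R) :
    orderIdeal ((d, g, 0) : R × R × N) = Ideal.span {d, g} := by
  ext c
  rw [mem_orderIdeal, Ideal.mem_span_pair]
  constructor
  · rintro ⟨f, rfl⟩
    refine ⟨f (1, 0, 0), f (0, 1, 0), ?_⟩
    rw [mul_comm _ d, mul_comm _ g, ← smul_eq_mul, ← smul_eq_mul, ← map_smul, ← map_smul,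
      ← map_add]
    simp
  · rintro ⟨a, b, rfl⟩
    exact ⟨(a • LinearMap.id).coprod ((b • LinearMap.id).coprod 0), by simp⟩

end OrderIdeal

section RankOneLaplacian

variable {R M N : Type*} [CommRing R] [AddCommGroup M] [Module R M] [AddCommGroup N] [Module R N]

/-- The endomorphism `x ↦ f u • x - f x • u` of `M`, the coordinate-free form of the matrix
`(vᵀu) I - u vᵀ`. For `u = v = (1, …, 1)` it is the Laplacian of a complete graph. -/
def rankOneLaplacian (f : Module.Dual R M) (u : M) : M →ₗ[R] M :=
  f u • LinearMap.id - f.smulRight u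

@[simp]
theorem rankOneLaplacian_apply (f : Module.Dual R M) (u x : M) :
    rankOneLaplacian f u x = f u • x - f x • u :=
  rfl

theorem mulVecLin_smul_one_sub_vecMulVec {ι : Type*} [Fintype ι] [DecidableEq ι] (u v : ι → R) :
    Matrix.mulVecLin ((v ⬝ᵥ u) • (1 : Matrix ι ι R) - Matrix.vecMulVec u v) =
      rankOneLaplacian (dotProductEquiv R ι v) u := by
  refine LinearMap.ext fun x => ?_
  simp [Matrix.vecMulVec_mulVec]

theorem map_range_rankOneLaplacian (e : M ≃ₗ[R] N) (f : Module.Dual R N) (u : M) :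
    (LinearMap.range (rankOneLaplacian (f ∘ₗ e.toLinearMap) u)).map e.toLinearMap =
      LinearMap.range (rankOneLaplacian f (e u)) := by
  have intertwines : e.toLinearMap ∘ₗ rankOneLaplacian (f ∘ₗ e.toLinearMap) u =
      rankOneLaplacian f (e u) ∘ₗ e.toLinearMap := by
    ext x
    simp
  rw [← LinearMap.range_comp, intertwines, LinearMap.range_comp_of_range_eq_top _ e.range]

theorem range_rankOneLaplacian_fst {κ : Type*} (d g : R) :
    LinearMap.range
        (rankOneLaplacian (LinearMap.fst R R (R × (κ → R))) (d, g, 0)) =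
      LinearMap.ker ((LinearMap.id : R →ₗ[R] R).prodMap
        ((Ideal.span {d, g}).mkQ.prodMap ((Ideal.span {d}).mkQ.compLeft κ))) := by
  ext ⟨t, s, y⟩
  simp only [LinearMap.mem_range, LinearMap.ker_prodMap, LinearMap.ker_id, LinearMap.ker_compLeft,
    Submodule.ker_mkQ, Submodule.mem_prod, Submodule.mem_bot, Submodule.mem_pi, Set.mem_univ,
    true_imp_iff, Ideal.mem_span_pair, Ideal.mem_span_singleton', Prod.exists,
    rankOneLaplacian_apply, LinearMap.fst_apply, Prod.smul_mk, Prod.mk_sub_mk, Prod.mk.injEq,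
    smul_eq_mul, smul_zero, sub_zero]
  constructor
  · rintro ⟨a, b, z, rfl, rfl, rfl⟩
    exact ⟨by ring, ⟨b, -a, by ring⟩, fun i => ⟨z i, by simp [mul_comm]⟩⟩
  · rintro ⟨rfl, ⟨b, a, rfl⟩, hy⟩
    choose z hz using hy
    exact ⟨-a, b, z, by ring, by ring, funext fun i => by simp [← hz, mul_comm]⟩

end RankOneLaplacian

section Splitting

variable {R M : Type*} [CommRing R] [AddCommGroup M] [Module R M]

theorem exists_linearEquiv_prod_ker (f : Module.Dual R M) {a : M} (ha : f a = 1) :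
    ∃ e : M ≃ₗ[R] R × LinearMap.ker f, (∀ x, (e x).1 = f x) ∧ e a = (1, 0) := by
  let proj : M →ₗ[R] LinearMap.ker f :=
    (LinearMap.id - f.smulRight a).codRestrict _ fun x => by simp [ha]
  have coe_proj (x : M) : (proj x : M) = x - f x • a := rfl
  have proj_ker (y : LinearMap.ker f) : proj y = y := Subtype.ext <| by rw [coe_proj]; simp
  have proj_a : proj a = 0 := Subtype.ext <| by rw [coe_proj]; simp [ha]
  refine ⟨.ofLinearMap (f.prod proj) ((LinearMap.toSpanSingleton R M a).coprod
    (LinearMap.ker f).subtype) ?_ ?_, fun _ => rfl, Prod.ext ha proj_a⟩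
  · ext y <;> simp [ha, proj_a, proj_ker]
  · ext x
    simp [coe_proj]

variable [IsDomain R] [IsPrincipalIdealRing R] [Module.Free R M] [Module.Finite R M]

theorem exists_linearEquiv_prod_pi {n : ℕ} (hn : Module.finrank R M = n + 1)
    (f : Module.Dual R M) {a : M} (ha : f a = 1) :
    ∃ e : M ≃ₗ[R] R × (Fin n → R), (∀ x, (e x).1 = f x) ∧ e a = (1, 0) := by
  obtain ⟨e, hef, hea⟩ := exists_linearEquiv_prod_ker f ha
  have finrank_ker : Module.finrank R (LinearMap.ker f) = n := by
    have := e.finrank_eq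
    rw [Module.finrank_prod, Module.finrank_self] at this
    omega
  let b := Module.finBasisOfFinrankEq R (LinearMap.ker f) finrank_ker
  exact ⟨e.trans ((LinearEquiv.refl R R).prodCongr b.equivFun), hef, by simp [hea]⟩

theorem exists_eq_smul_and_dual_apply_eq_one [Nontrivial M] (w : M) :
    ∃ (g : R) (a : M) (f : Module.Dual R M), w = g • a ∧ f a = 1 := by
  let b := Module.Free.chooseBasis R M
  rcases eq_or_ne w 0 with rfl | hw
  · obtain ⟨i⟩ := b.index_nonempty
    exact ⟨0, b i, b.coord i, by simp, by simp⟩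
  obtain ⟨g, hg⟩ := IsPrincipalIdealRing.principal (orderIdeal w : Ideal R)
  obtain ⟨f, hf⟩ : ∃ f : Module.Dual R M, f w = g :=
    mem_orderIdeal.1 (hg ▸ Submodule.mem_span_singleton_self g)
  have dvd_coord (i) : g ∣ b.coord i w :=
    Ideal.mem_span_singleton.1 (hg.le (mem_orderIdeal.2 ⟨b.coord i, rfl⟩))
  choose c hc using dvd_coord
  have hwa : w = g • ∑ i, c i • b i := by
    rw [Finset.smul_sum]
    simp_rw [smul_smul, ← hc]
    exact (b.sum_repr w).symm
  have hg0 : g ≠ 0 := by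
    rintro rfl
    exact hw (by rw [hwa, zero_smul])
  refine ⟨g, _, f, hwa, mul_left_cancel₀ hg0 ?_⟩
  rw [← smul_eq_mul, ← map_smul, ← hwa, hf, mul_one]

theorem exists_linearEquiv_apply_eq_mk_zero {n : ℕ} (hn : Module.finrank R M = n + 1) (w : M) :
    ∃ (e : M ≃ₗ[R] R × (Fin n → R)) (g : R), e w = (g, 0) := by
  have : Nontrivial M := Module.nontrivial_of_finrank_pos (R := R) (by omega)
  obtain ⟨g, a, f, rfl, ha⟩ := exists_eq_smul_and_dual_apply_eq_one (R := R) w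
  obtain ⟨e, -, hea⟩ := exists_linearEquiv_prod_pi hn f ha
  exact ⟨e, g, by simp [hea]⟩

theorem exists_linearEquiv_fst_comp_eq_and_apply_eq {k : ℕ} (hk : Module.finrank R M = k + 2)
    {f : Module.Dual R M} (hf : Function.Surjective f) (u : M) :
    ∃ (e : M ≃ₗ[R] R × R × (Fin k → R)) (g : R),
      LinearMap.fst R R (R × (Fin k → R)) ∘ₗ e.toLinearMap = f ∧ e u = (f u, g, 0) := by
  obtain ⟨a, ha⟩ := hf 1
  obtain ⟨e₁, he₁, -⟩ := exists_linearEquiv_prod_pi hk f ha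
  obtain ⟨e₂, g, he₂⟩ :=
    exists_linearEquiv_apply_eq_mk_zero (Module.finrank_fin_fun R) (e₁ u).2
  exact ⟨e₁.trans ((LinearEquiv.refl R R).prodCongr e₂), g, LinearMap.ext he₁,
    Prod.ext (he₁ u) he₂⟩

theorem nonempty_quotient_range_rankOneLaplacian_equiv {k : ℕ}
    (hk : Module.finrank R M = k + 2) {f : Module.Dual R M} (hf : Function.Surjective f) (u : M) :
    Nonempty ((M ⧸ LinearMap.range (rankOneLaplacian f u)) ≃ₗ[R]
      R × (R ⧸ (orderIdeal u : Ideal R)) × (Fin k → R ⧸ Ideal.span {f u})) := by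
  obtain ⟨e, g, rfl, heu⟩ := exists_linearEquiv_fst_comp_eq_and_apply_eq hk hf u
  set d := (LinearMap.fst R R (R × (Fin k → R)) ∘ₗ e.toLinearMap) u
  let π := (LinearMap.id : R →ₗ[R] R).prodMap
    ((Ideal.span {d, g}).mkQ.prodMap ((Ideal.span {d}).mkQ.compLeft (Fin k)))
  have π_surjective : Function.Surjective π := by
    have mkQ_surjective (I : Ideal R) : Function.Surjective I.mkQ := I.mkQ_surjective
    exact Function.surjective_id.prodMap ((mkQ_surjective _).prodMap (mkQ_surjective _).comp_left)
  rw [← orderIdeal_linearEquiv_apply e u, heu, orderIdeal_pair_zero]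
  exact ⟨(Submodule.Quotient.equiv _ (LinearMap.ker π) e <| by
    rw [← range_rankOneLaplacian_fst, ← heu]
    exact map_range_rankOneLaplacian e _ u).trans (π.quotKerEquivOfSurjective π_surjective)⟩

end Splitting

theorem dotProductEquiv_surjective {R ι : Type*} [CommRing R] [Fintype ι] [DecidableEq ι]
    {v : ι → R} (hv : Ideal.span (Set.range v) = ⊤) :
    Function.Surjective (dotProductEquiv R ι v) := by
  obtain ⟨a, ha⟩ := Ideal.mem_span_range_iff_exists_fun.1 ((Ideal.eq_top_iff_one _).1 hv)
  exact fun c => ⟨c • a, by simp [dotProduct_comm v, show a ⬝ᵥ v = 1 from ha]⟩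

theorem span_gcd_eq_span_range {R ι : Type*} [CommRing R] [IsBezout R]
    [NormalizedGCDMonoid R] [Fintype ι] (u : ι → R) :
    Ideal.span {Finset.univ.gcd u} = Ideal.span (Set.range u) := by
  apply le_antisymm
  · rw [Ideal.span_singleton_le_iff_mem, Ideal.mem_span_range_iff_exists_fun]
    obtain ⟨c, hc⟩ := Finset.gcd_eq_sum_mul Finset.univ u
    exact ⟨c, by simp [hc, mul_comm]⟩
  · rw [Ideal.span_le]
    rintro _ ⟨i, rfl⟩
    exact Ideal.mem_span_singleton.2 (Finset.gcd_dvd (Finset.mem_univ i))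

theorem stmt1_general {R ι : Type*} [CommRing R] [IsDomain R] [IsPrincipalIdealRing R]
    [Fintype ι] [DecidableEq ι] {k : ℕ} (hk : Fintype.card ι = k + 2) (u v : ι → R)
    (hv : Ideal.span (Set.range v) = ⊤) :
    Nonempty (((ι → R) ⧸ LinearMap.range (Matrix.mulVecLin
        ((v ⬝ᵥ u) • (1 : Matrix ι ι R) - Matrix.vecMulVec u v))) ≃ₗ[R]
      R × (R ⧸ Ideal.span (Set.range u)) × (Fin k → R ⧸ Ideal.span {v ⬝ᵥ u})) := by
  rw [mulVecLin_smul_one_sub_vecMulVec, ← orderIdeal_pi]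
  exact nonempty_quotient_range_rankOneLaplacian_equiv (by simpa using hk)
    (dotProductEquiv_surjective hv) u

/-- Let `m > 1`, `u, v ∈ ℤ^m` with `v₁ = 1`. Let `γ = gcd(u)`,
`d = vᵀu`, and `L = d·I_m − u·vᵀ`. Then the cokernel `ℤ^m / (L·ℤ^m)` is
isomorphic to `ℤ ⊕ (ℤ/γℤ) ⊕ (ℤ/dℤ)^{m−2}`. -/
theorem stmt1 (m : ℕ) (hm : 1 < m) (u v : Fin m → ℤ)
    (hv1 : v ⟨0, by omega⟩ = 1)
    (γ : ℕ) (hγ : (γ : ℤ) = Finset.univ.gcd u)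
    (d : ℤ) (hd : d = ∑ i, v i * u i)
    (L : Matrix (Fin m) (Fin m) ℤ)
    (hL : L = d • (1 : Matrix (Fin m) (Fin m) ℤ) - Matrix.vecMulVec u v) :
    Nonempty
      (((Fin m → ℤ) ⧸ LinearMap.range (Matrix.mulVecLin L)) ≃+
        (ℤ × ZMod γ × (Fin (m - 2) → ZMod d.natAbs))) := by
  subst hd hL
  obtain ⟨e⟩ := stmt1_general (k := m - 2) (by rw [Fintype.card_fin]; omega) u v
    ((Ideal.eq_top_iff_one _).2 (Ideal.subset_span ⟨_, hv1⟩))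
  rw [← span_gcd_eq_span_range, ← hγ] at e
  exact ⟨e.toAddEquiv.trans <| (AddEquiv.refl ℤ).prodCongr <|
    (Int.quotientSpanNatEquivZMod γ).toAddEquiv.prodCongr <|
    AddEquiv.piCongrRight fun _ => (Int.quotientSpanEquivZMod _).toAddEquiv⟩
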